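/- Let f be a squarefree polynomial in two variables over the complex numbers with zero constant term, and let R = ℂ[x,y]/(f). Then the first Ext group Ext¹_R(Ω_{R/ℂ}, R), computed in the category of R-modules, is isomorphic as an abelian group to the quotient ring R/((∂f/∂x) mod (f), (∂f/∂y) mod (f)), i.e. to ℂ[x,y]/(f, ∂f/∂x, ∂f/∂y). -/

import Mathlib

open MvPolynomial CategoryTheory

theorem aux_pderiv_dvd (p : MvPolynomial (Fin 2) ℂ) (i : Fin 2) (h : p ∣ pderiv i p) :
    pderiv i p = 0 := by
  by_contra hne
  have h1 : (pderiv i p).totalDegree < p.totalDegree := by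
    obtain ⟨m, hm, hd⟩ : ∃ m ∈ (pderiv i p).support, (pderiv i p).totalDegree = m.degree := by
      have := Finset.exists_mem_eq_sup (pderiv i p).support
        (MvPolynomial.support_nonempty.2 hne) (fun s => s.degree)
      exact this
    rw [hd]
    have hm' := MvPolynomial.mem_support_iff.1 hm
    rw [coeff_pderiv] at hm'
    have h2 : m + Finsupp.single i 1 ∈ p.support := by
      rw [MvPolynomial.mem_support_iff]
      intro h0
      simp [h0] at hm'
    have h3 := MvPolynomial.le_totalDegree h2
    have h4 : (m + Finsupp.single i 1).degree ≤ p.totalDegree := h3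
    simp at h4
    omega
  obtain ⟨c, hc⟩ := h
  have hp : p ≠ 0 := by rintro rfl; simp at hne
  have hc0 : c ≠ 0 := by rintro rfl; simp at hc; exact hne hc
  have := MvPolynomial.totalDegree_mul_of_isDomain hp hc0
  rw [← hc] at this
  omega

theorem aux_const (p : MvPolynomial (Fin 2) ℂ) (h : ∀ i, pderiv i p = 0) :
    p = C (constantCoeff p) := by
  ext m
  rw [coeff_C]
  split_ifs with hm
  · subst hm; rfl
  · obtain ⟨i, hi⟩ : ∃ i, m i ≠ 0 := by
      by_contra! hh
      exact hm (by ext i; simp [hh])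
    have h1 := coeff_pderiv (i := i) p (m - Finsupp.single i 1)
    have h2 : m - Finsupp.single i 1 + Finsupp.single i 1 = m :=
      tsub_add_cancel_of_le (by simpa [Nat.one_le_iff_ne_zero] using hi)
    rw [h i, h2, coeff_zero] at h1
    rcases mul_eq_zero.1 h1.symm with h3 | h3
    · exact h3
    · exfalso
      norm_cast at h3

theorem aux_dvd (f : MvPolynomial (Fin 2) ℂ) (hf : Squarefree f) (g : MvPolynomial (Fin 2) ℂ)
    (h : ∀ i, f ∣ g * pderiv i f) : f ∣ g := by
  have hf0 : f ≠ 0 := hf.ne_zero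
  have key : ∀ p, Prime p → p ∣ f → p ∣ g := by
    intro p hp hpf
    by_contra hpg
    obtain ⟨q, rfl⟩ := hpf
    have hpq : ¬ p ∣ q := fun hq => hp.not_isUnit (hf p (mul_dvd_mul_left p hq))
    have hz : ∀ i, pderiv i p = 0 := by
      intro i
      apply aux_pderiv_dvd
      have h1 : p ∣ g * pderiv i (p * q) := (dvd_mul_right p q).trans (h i)
      rw [pderiv_mul] at h1
      have h2 := (hp.dvd_or_dvd h1).resolve_left hpg
      have h3 : p ∣ pderiv i p * q := (dvd_add_left (dvd_mul_right p _)).1 h2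
      exact (hp.dvd_or_dvd h3).resolve_right hpq
    have hC := aux_const p hz
    apply hp.not_isUnit
    rw [hC]
    apply IsUnit.map
    rw [isUnit_iff_ne_zero]
    intro h0
    rw [h0, map_zero] at hC
    exact hp.ne_zero hC
  clear h
  induction f using UniqueFactorizationMonoid.induction_on_prime with
  | h₁ => exact absurd rfl hf0
  | h₂ x hx => exact hx.dvd
  | h₃ a p ha hp ih =>
    have h1 := ih (hf.squarefree_of_dvd (dvd_mul_left a p)) ha
      (fun q hq hqa => key q hq (hqa.mul_left p))
    have hpa : ¬ p ∣ a := fun hq => hp.not_isUnit (hf p (mul_dvd_mul_left p hq))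
    obtain ⟨c, rfl⟩ := h1
    have := (hp.dvd_or_dvd (key p hp (dvd_mul_right p a))).resolve_left hpa
    rw [mul_comm p a]
    exact mul_dvd_mul_left a this

section
open scoped TensorProduct

theorem aux_kaehler (f : MvPolynomial (Fin 2) ℂ) :
    ∃ π : (Fin 2 → (MvPolynomial (Fin 2) ℂ ⧸ Ideal.span {f})) →ₗ[MvPolynomial (Fin 2) ℂ ⧸ Ideal.span {f}]
        (KaehlerDifferential ℂ (MvPolynomial (Fin 2) ℂ ⧸ Ideal.span {f})),
      Function.Surjective π ∧ Function.Exact (LinearMap.toSpanSingleton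
        (MvPolynomial (Fin 2) ℂ ⧸ Ideal.span {f}) (Fin 2 → (MvPolynomial (Fin 2) ℂ ⧸ Ideal.span {f}))
        (fun i => Ideal.Quotient.mk (Ideal.span {f}) (pderiv i f))) π := by
  let b := (KaehlerDifferential.mvPolynomialBasis ℂ (Fin 2)).baseChange (MvPolynomial (Fin 2) ℂ ⧸ Ideal.span {f})
  let e := b.equivFun.symm
  have hsurj : Function.Surjective (algebraMap (MvPolynomial (Fin 2) ℂ) (MvPolynomial (Fin 2) ℂ ⧸ Ideal.span {f})) := Ideal.Quotient.mk_surjective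
  have he : e (fun i => Ideal.Quotient.mk (Ideal.span {f}) (pderiv i f)) =
      1 ⊗ₜ KaehlerDifferential.D ℂ (MvPolynomial (Fin 2) ℂ) f := by
    rw [← LinearEquiv.eq_symm_apply]
    ext i
    simp only [e, LinearEquiv.symm_symm, Module.Basis.equivFun_apply, b]
    rw [Module.Basis.baseChange_repr_tmul, KaehlerDifferential.mvPolynomialBasis_repr_apply]
    rw [← Algebra.algebraMap_eq_smul_one]
    rfl
  refine ⟨(KaehlerDifferential.mapBaseChange ℂ (MvPolynomial (Fin 2) ℂ) (MvPolynomial (Fin 2) ℂ ⧸ Ideal.span {f})) ∘ₗ e.toLinearMap, ?_, ?_⟩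
  · exact (KaehlerDifferential.mapBaseChange_surjective ℂ (MvPolynomial (Fin 2) ℂ) (MvPolynomial (Fin 2) ℂ ⧸ Ideal.span {f}) hsurj).comp e.surjective
  · intro v
    have hex := KaehlerDifferential.exact_kerCotangentToTensor_mapBaseChange ℂ (MvPolynomial (Fin 2) ℂ) (MvPolynomial (Fin 2) ℂ ⧸ Ideal.span {f}) hsurj (e v)
    refine hex.trans ?_
    constructor
    · rintro ⟨x, hx⟩
      obtain ⟨⟨x, hxm⟩, rfl⟩ := Ideal.toCotangent_surjective _ x
      rw [KaehlerDifferential.kerCotangentToTensor_toCotangent] at hx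
      have hxm' : x ∈ Ideal.span {f} := by
        rw [← Ideal.Quotient.eq_zero_iff_mem]; exact hxm
      obtain ⟨a, rfl⟩ := Ideal.mem_span_singleton'.1 hxm'
      refine ⟨algebraMap (MvPolynomial (Fin 2) ℂ) (MvPolynomial (Fin 2) ℂ ⧸ Ideal.span {f}) a, ?_⟩
      apply e.injective
      rw [← hx, LinearMap.toSpanSingleton_apply, map_smul, he]
      have hf0 : algebraMap (MvPolynomial (Fin 2) ℂ) (MvPolynomial (Fin 2) ℂ ⧸ Ideal.span {f}) f = 0 :=
        Ideal.Quotient.eq_zero_iff_mem.2 (Ideal.mem_span_singleton_self f)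
      simp only [Derivation.leibniz, TensorProduct.tmul_add, ← TensorProduct.smul_tmul,
        ← Algebra.algebraMap_eq_smul_one, hf0, TensorProduct.zero_tmul, add_zero]
      rw [TensorProduct.smul_tmul', smul_eq_mul, mul_one]
    · rintro ⟨r, rfl⟩
      obtain ⟨a, rfl⟩ := hsurj r
      have hf0 : f ∈ RingHom.ker (algebraMap (MvPolynomial (Fin 2) ℂ) (MvPolynomial (Fin 2) ℂ ⧸ Ideal.span {f})) :=
        Ideal.Quotient.eq_zero_iff_mem.2 (Ideal.mem_span_singleton_self f)
      refine ⟨a • Ideal.toCotangent _ ⟨f, hf0⟩, ?_⟩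
      rw [map_smul, KaehlerDifferential.kerCotangentToTensor_toCotangent,
        LinearMap.toSpanSingleton_apply, map_smul, he, algebraMap_smul]
end

universe u
section
variable {R : Type u} [CommRing R] (M : Type u) [AddCommGroup M] [Module R M]
  (v : Fin 2 → R) (π : (Fin 2 → R) →ₗ[R] M)

noncomputable def auxX (R : Type u) [CommRing R] : ℕ → ModuleCat.{u} R
  | 0 => ModuleCat.of R (Fin 2 → R)
  | 1 => ModuleCat.of R R
  | _ + 2 => ModuleCat.of R PUnit

noncomputable def auxd : ∀ n, auxX R (n + 1) ⟶ auxX R n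
  | 0 => ModuleCat.ofHom (LinearMap.toSpanSingleton R (Fin 2 → R) v)
  | _ + 1 => 0

noncomputable abbrev auxC : ChainComplex (ModuleCat.{u} R) ℕ :=
  ChainComplex.of (auxX R) (auxd v) (fun n => by
    rw [show auxd v (n + 1) = 0 from rfl, Limits.zero_comp])

theorem auxC_d_one : (auxC v).d 1 0 = auxd v 0 := ChainComplex.of_d _ _ 0
theorem auxC_d_two (n : ℕ) : (auxC v).d (n + 2) (n + 1) = 0 := ChainComplex.of_d _ _ (n + 1)

noncomputable def auxRes (hinj : Function.Injective (LinearMap.toSpanSingleton R (Fin 2 → R) v))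
    (hsurj : Function.Surjective π)
    (hex : Function.Exact (LinearMap.toSpanSingleton R (Fin 2 → R) v) π) :
    ProjectiveResolution (ModuleCat.of R M) where
  complex := auxC v
  projective := by
    rintro (_ | _ | n)
    · exact (ModuleCat.projective_of_free (Pi.basisFun R (Fin 2)) :
        Projective (ModuleCat.of R (Fin 2 → R)))
    · exact (ModuleCat.projective_of_free (Module.Basis.singleton Unit R) :
        Projective (ModuleCat.of R R))
    · exact (ModuleCat.projective_of_free (Module.Basis.empty (ι := Empty) PUnit.{u+1}) :
        Projective (ModuleCat.of R PUnit.{u+1}))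
  π := (ChainComplex.toSingle₀Equiv _ _).symm ⟨ModuleCat.ofHom π, by
    rw [auxC_d_one]
    exact ModuleCat.hom_ext hex.linearMap_comp_eq_zero⟩
  quasiIso := ⟨fun n => by
    cases n with
    | zero =>
      rw [ChainComplex.quasiIsoAt₀_iff, ShortComplex.quasiIso_iff_of_zeros']
      · have hS : (ShortComplex.moduleCatMk _ _ hex.linearMap_comp_eq_zero).Exact :=
          ModuleCat.shortComplex_exact _ hex
        refine (ShortComplex.exact_and_epi_g_iff_of_iso ?_).2
          ⟨hS, (ModuleCat.epi_iff_surjective _).2 hsurj⟩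
        refine ShortComplex.isoMk (Iso.refl _) (Iso.refl _) (Iso.refl _) ?_ ?_
        · rfl
        · rfl
      all_goals rfl
    | succ n =>
      rw [quasiIsoAt_iff_exactAt']
      · rw [HomologicalComplex.exactAt_iff' _ (n + 1 + 1) (n + 1) n (by simp) (by simp)]
        rw [ShortComplex.moduleCat_exact_iff]
        intro x hx
        refine ⟨0, ?_⟩
        rw [map_zero]
        cases n with
        | zero =>
          have h1 : ((auxC v).d 1 0) x = 0 := hx
          rw [auxC_d_one] at h1
          exact (hinj (h1.trans (map_zero _).symm)).symm
        | succ n => exact Subsingleton.elim (α := PUnit) _ _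
      · apply ChainComplex.exactAt_succ_single_obj⟩

theorem aux_ext (hinj : Function.Injective (LinearMap.toSpanSingleton R (Fin 2 → R) v))
    (hsurj : Function.Surjective π)
    (hex : Function.Exact (LinearMap.toSpanSingleton R (Fin 2 → R) v) π) :
    Nonempty ((((Ext R (ModuleCat.{u} R) 1).obj (Opposite.op (ModuleCat.of R M))).obj
      (ModuleCat.of R R)) ≃+ R ⧸ Ideal.span {v 0, v 1}) := by
  let P := auxRes M v π hinj hsurj hex
  let K := (P.complex.linearYonedaObj R (ModuleCat.of R R))
  let S := K.sc' 0 1 2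
  have hd1 : P.complex.d 1 0 = auxd v 0 := auxC_d_one v
  have hd2 : P.complex.d 2 1 = 0 := auxC_d_two v 0
  let i1 := P.isoExt (R := R) 1 (ModuleCat.of R R)
  let i2 : K.homology 1 ≅ S.homology :=
    ShortComplex.homologyMapIso (K.isoSc' 0 1 2 (by simp) (by simp))
  let i3 := S.moduleCatHomologyIso
  let i : _ ≃ₗ[R] _ := (i1 ≪≫ i2 ≪≫ i3).toLinearEquiv
  let ev : S.X₂ →ₗ[R] R :=
    { toFun := fun (x : ModuleCat.of R R ⟶ ModuleCat.of R R) => x.hom (1 : R)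
      map_add' := fun x y => rfl
      map_smul' := fun r x => rfl }
  let ψ : LinearMap.ker S.g.hom →ₗ[R] R ⧸ Ideal.span {v 0, v 1} :=
    (Ideal.span {v 0, v 1}).mkQ ∘ₗ ev ∘ₗ (LinearMap.ker S.g.hom).subtype
  have hψ : Function.Surjective ψ := by
    intro y
    obtain ⟨r, rfl⟩ := Submodule.mkQ_surjective _ y
    let x : ModuleCat.of R R ⟶ ModuleCat.of R R := ModuleCat.ofHom (LinearMap.toSpanSingleton R R r)
    refine ⟨⟨x, ?_⟩, ?_⟩
    · change P.complex.d 2 1 ≫ x = 0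
      rw [hd2]
      exact Limits.zero_comp
    · change Submodule.mkQ _ (LinearMap.toSpanSingleton R R r 1) = _
      simp
  have hker : LinearMap.range S.moduleCatToCycles = LinearMap.ker ψ := by
    ext ⟨x, hx⟩
    change (ModuleCat.of R R ⟶ ModuleCat.of R R) at x
    have h1 : (⟨x, hx⟩ ∈ LinearMap.ker ψ) ↔ x.hom (1 : R) ∈ Ideal.span {v 0, v 1} := by
      rw [LinearMap.mem_ker]
      exact Submodule.Quotient.mk_eq_zero _
    have h2 : (⟨x, hx⟩ ∈ LinearMap.range S.moduleCatToCycles) ↔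
        ∃ y : ModuleCat.of R (Fin 2 → R) ⟶ ModuleCat.of R R, auxd v 0 ≫ y = x := by
      constructor
      · rintro ⟨y, hy⟩
        refine ⟨y, ?_⟩
        rw [← hd1]
        exact congrArg Subtype.val hy
      · rintro ⟨y, hy⟩
        refine ⟨y, Subtype.ext ?_⟩
        rw [← hd1] at hy
        exact hy
    rw [h1, h2, Ideal.mem_span_pair]
    constructor
    · rintro ⟨y, rfl⟩
      refine ⟨y.hom (Pi.single 0 1), y.hom (Pi.single 1 1), ?_⟩
      change _ = y.hom ((LinearMap.toSpanSingleton R (Fin 2 → R) v) 1)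
      rw [LinearMap.toSpanSingleton_apply_one]
      rw [LinearMap.pi_apply_eq_sum_univ y.hom v, Fin.sum_univ_two, smul_eq_mul, smul_eq_mul]
      rw [mul_comm, mul_comm _ (v 1)]
      congr <;> ext j <;> fin_cases j <;> rfl
    · rintro ⟨a, b, hab⟩
      refine ⟨ModuleCat.ofHom (a • LinearMap.proj 0 + b • LinearMap.proj 1), ?_⟩
      apply ModuleCat.hom_ext
      apply LinearMap.ext_ring
      refine Eq.trans ?_ hab
      change (a • LinearMap.proj 0 + b • LinearMap.proj 1 : (Fin 2 → R) →ₗ[R] R) ((LinearMap.toSpanSingleton R (Fin 2 → R) v) 1) = _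
      rw [LinearMap.toSpanSingleton_apply_one]
      simp
  exact ⟨(i.trans ((Submodule.quotEquivOfEq _ _ hker).trans
    (ψ.quotKerEquivOfSurjective hψ))).toAddEquiv⟩
end

/-- For a squarefree `f ∈ ℂ[x,y]` with zero constant term and `R = ℂ[x,y]/(f)`,
`Ext¹_R(Ω_{R/ℂ}, R) ≅ ℂ[x,y]/(f, ∂_x f, ∂_y f)` as abelian groups
(the key computation in the proof of Lemma 2.5). -/
theorem ext_one_kaehler (f : MvPolynomial (Fin 2) ℂ) (hf : Squarefree f)
    (h0 : constantCoeff f = 0) :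
    Nonempty (
      (((Ext (MvPolynomial (Fin 2) ℂ ⧸ Ideal.span {f})
            (ModuleCat (MvPolynomial (Fin 2) ℂ ⧸ Ideal.span {f})) 1).obj
          (Opposite.op (ModuleCat.of (MvPolynomial (Fin 2) ℂ ⧸ Ideal.span {f})
            (KaehlerDifferential ℂ (MvPolynomial (Fin 2) ℂ ⧸ Ideal.span {f}))))).obj
        (ModuleCat.of (MvPolynomial (Fin 2) ℂ ⧸ Ideal.span {f})
          (MvPolynomial (Fin 2) ℂ ⧸ Ideal.span {f})))
      ≃+ (MvPolynomial (Fin 2) ℂ ⧸ Ideal.span {f, pderiv 0 f, pderiv 1 f})) := by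
  obtain ⟨π, hsurj, hex⟩ := aux_kaehler f
  have hinj : Function.Injective (LinearMap.toSpanSingleton
      (MvPolynomial (Fin 2) ℂ ⧸ Ideal.span {f})
      (Fin 2 → (MvPolynomial (Fin 2) ℂ ⧸ Ideal.span {f}))
      (fun i => Ideal.Quotient.mk (Ideal.span {f}) (pderiv i f))) := by
    rw [← LinearMap.ker_eq_bot, LinearMap.ker_eq_bot']
    intro r hr
    obtain ⟨g, rfl⟩ := Ideal.Quotient.mk_surjective r
    rw [Ideal.Quotient.eq_zero_iff_dvd]
    apply aux_dvd f hf
    intro i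
    have h1 := congrFun hr i
    rw [← Ideal.Quotient.eq_zero_iff_dvd, map_mul]
    exact h1
  obtain ⟨e⟩ := aux_ext _ _ π hinj hsurj hex
  have h1 : Ideal.span {Ideal.Quotient.mk (Ideal.span {f}) (pderiv 0 f),
      Ideal.Quotient.mk (Ideal.span {f}) (pderiv 1 f)} =
      (Ideal.span {pderiv 0 f, pderiv 1 f}).map (Ideal.Quotient.mk (Ideal.span {f})) := by
    rw [Ideal.map_span, Set.image_pair]
  have h2 : Ideal.span {f} ⊔ Ideal.span {pderiv 0 f, pderiv 1 f} =
      Ideal.span {f, pderiv 0 f, pderiv 1 f} := (Ideal.span_insert _ _).symm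
  exact ⟨e.trans ((Ideal.quotEquivOfEq h1).toAddEquiv.trans
    ((DoubleQuot.quotQuotEquivQuotSup _ _).toAddEquiv.trans
      (Ideal.quotEquivOfEq h2).toAddEquiv))⟩
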